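/- Non-conforming minorant for the gradient part: let ṽ ∈ L²(Ω;ℝ^N), set E := ∇û − A^{−1}ṽ, and let E = g + A^{−1}ψ with g ∈ 𝒢, ψ ∈ D₀ be its Helmholtz decomposition. Then for every u ∈ H¹°₋₁(Ω), ‖g‖²_A ≥ M₋(A^{−1}ṽ,u) := 2∫_Ω f u dx − ∫_Ω A∇u·∇u dx − 2∫_Ω ṽ·∇u dx. -/

import Mathlib

open MeasureTheory Filter Topology
open scoped RealInnerProductSpace

noncomputable section

/-- Euclidean space `ℝ^N`. -/
abbrev Euc (N : ℕ) := EuclideanSpace ℝ (Fin N)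

/-- The Poincaré constant `c_N = 2/(N-2)`. -/
def cN (N : ℕ) : ℝ := 2 / ((N : ℝ) - 2)

variable {N : ℕ}

/-- Squared weighted `L²_s(Ω)` norm: `∫_Ω (1+|x|²)^s u(x)² dx`. -/
def sqL2 (Ω : Set (Euc N)) (s : ℝ) (u : Euc N → ℝ) : ℝ :=
  ∫ x in Ω, (1 + ‖x‖ ^ 2) ^ s * u x ^ 2

/-- Weighted `L²_s(Ω)` norm. -/
def nrmL2 (Ω : Set (Euc N)) (s : ℝ) (u : Euc N → ℝ) : ℝ :=
  Real.sqrt (sqL2 Ω s u)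

/-- Membership in the weighted space `L²_s(Ω)` (scalar functions). -/
def MemL2 (Ω : Set (Euc N)) (s : ℝ) (u : Euc N → ℝ) : Prop :=
  AEStronglyMeasurable u (volume.restrict Ω) ∧
    Integrable (fun x => (1 + ‖x‖ ^ 2) ^ s * u x ^ 2) (volume.restrict Ω)

/-- Squared weighted `L²_s(Ω;ℝ^N)` norm for vector fields. -/
def sqL2V (Ω : Set (Euc N)) (s : ℝ) (v : Euc N → Euc N) : ℝ :=
  ∫ x in Ω, (1 + ‖x‖ ^ 2) ^ s * ‖v x‖ ^ 2

/-- Weighted `L²_s(Ω;ℝ^N)` norm for vector fields. -/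
def nrmL2V (Ω : Set (Euc N)) (s : ℝ) (v : Euc N → Euc N) : ℝ :=
  Real.sqrt (sqL2V Ω s v)

/-- Membership in the weighted space `L²_s(Ω;ℝ^N)` (vector fields). -/
def MemL2V (Ω : Set (Euc N)) (s : ℝ) (v : Euc N → Euc N) : Prop :=
  AEStronglyMeasurable v (volume.restrict Ω) ∧
    Integrable (fun x => (1 + ‖x‖ ^ 2) ^ s * ‖v x‖ ^ 2) (volume.restrict Ω)

/-- Test functions: `φ ∈ C_c^∞(Ω)`. -/
def IsTest (Ω : Set (Euc N)) (φ : Euc N → ℝ) : Prop :=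
  ContDiff ℝ (⊤ : ℕ∞) φ ∧ HasCompactSupport φ ∧ tsupport φ ⊆ Ω

/-- `g` is the weak gradient of `u` on `Ω`:
`∫_Ω u ∇φ = −∫_Ω φ g` for all test functions `φ`. -/
def IsWeakGrad (Ω : Set (Euc N)) (u : Euc N → ℝ) (g : Euc N → Euc N) : Prop :=
  ∀ φ : Euc N → ℝ, IsTest Ω φ →
    (∫ x in Ω, u x • gradient φ x) = - ∫ x in Ω, φ x • g x

/-- `d` is the weak divergence of the vector field `v` on `Ω`:
`∫_Ω v·∇φ = −∫_Ω d φ` for all test functions `φ`. -/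
def IsWeakDiv (Ω : Set (Euc N)) (v : Euc N → Euc N) (d : Euc N → ℝ) : Prop :=
  ∀ φ : Euc N → ℝ, IsTest Ω φ →
    (∫ x in Ω, ⟪v x, gradient φ x⟫) = - ∫ x in Ω, d x * φ x

/-- `u ∈ H¹°₋₁(Ω)` with weak gradient `g`: `u ∈ L²₋₁(Ω)`, `g ∈ L²(Ω;ℝ^N)` is the weak
gradient of `u`, and `u` is approximated by test functions in the natural norms. -/
def MemH10 (Ω : Set (Euc N)) (u : Euc N → ℝ) (g : Euc N → Euc N) : Prop :=
  MemL2 Ω (-1) u ∧ MemL2V Ω 0 g ∧ IsWeakGrad Ω u g ∧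
    ∃ φ : ℕ → Euc N → ℝ, (∀ n, IsTest Ω (φ n)) ∧
      Tendsto (fun n => nrmL2 Ω (-1) (fun x => u x - φ n x)) atTop (𝓝 0) ∧
      Tendsto (fun n => nrmL2V Ω 0 (fun x => g x - gradient (φ n) x)) atTop (𝓝 0)

/-- `g ∈ 𝒢`, the closure in `L²(Ω;ℝ^N)` of `{∇φ : φ ∈ C_c^∞(Ω)}`. -/
def MemG (Ω : Set (Euc N)) (g : Euc N → Euc N) : Prop :=
  MemL2V Ω 0 g ∧
    ∃ φ : ℕ → Euc N → ℝ, (∀ n, IsTest Ω (φ n)) ∧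
      Tendsto (fun n => nrmL2V Ω 0 (fun x => g x - gradient (φ n) x)) atTop (𝓝 0)

/-- `ψ ∈ D₀`, the set of weakly divergence-free fields in `L²(Ω;ℝ^N)`. -/
def MemD0 (Ω : Set (Euc N)) (ψ : Euc N → Euc N) : Prop :=
  MemL2V Ω 0 ψ ∧
    ∀ φ : Euc N → ℝ, IsTest Ω φ → (∫ x in Ω, ⟪ψ x, gradient φ x⟫) = 0

/-- The coefficient matrix field `A : Ω → ℝ^{N×N}`: measurable, essentially bounded,
symmetric, and uniformly coercive (`A(x)ξ·ξ ≥ α⁻²|ξ|²` for a.e. `x ∈ Ω`). -/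
structure Coeff (N : ℕ) (Ω : Set (Euc N)) where
  A : Euc N → Euc N →L[ℝ] Euc N
  α : ℝ
  α_pos : 0 < α
  meas : ∀ ξ : Euc N, AEStronglyMeasurable (fun x => A x ξ) (volume.restrict Ω)
  bdd : ∃ C : ℝ, ∀ᵐ x ∂(volume.restrict Ω), ∀ ξ : Euc N, ‖A x ξ‖ ≤ C * ‖ξ‖
  symm : ∀ x : Euc N, ∀ ξ η : Euc N, ⟪A x ξ, η⟫ = ⟪ξ, A x η⟫
  coer : ∀ᵐ x ∂(volume.restrict Ω), ∀ ξ : Euc N, α⁻¹ ^ 2 * ‖ξ‖ ^ 2 ≤ ⟪A x ξ, ξ⟫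

/-- The weighted inner product `⟨v,w⟩_A = ∫_Ω A v · w dx`. -/
def ipA (Ω : Set (Euc N)) (A : Euc N → Euc N →L[ℝ] Euc N) (v w : Euc N → Euc N) : ℝ :=
  ∫ x in Ω, ⟪A x (v x), w x⟫

/-- The squared `A`-weighted norm `‖v‖²_A = ∫_Ω A v · v dx`. -/
def sqA (Ω : Set (Euc N)) (A : Euc N → Euc N →L[ℝ] Euc N) (v : Euc N → Euc N) : ℝ :=
  ipA Ω A v v

/-- The `A`-weighted norm `‖v‖_A`. -/
def nrmA (Ω : Set (Euc N)) (A : Euc N → Euc N →L[ℝ] Euc N) (v : Euc N → Euc N) : ℝ :=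
  Real.sqrt (sqA Ω A v)

/-- `w = A⁻¹ v` (a.e. on `Ω`), with `w ∈ L²(Ω;ℝ^N)`. -/
def IsAInv (Ω : Set (Euc N)) (A : Euc N → Euc N →L[ℝ] Euc N) (v w : Euc N → Euc N) : Prop :=
  MemL2V Ω 0 w ∧ ∀ᵐ x ∂(volume.restrict Ω), A x (w x) = v x

/-!
Put `σ = A g + ṽ`. Since `A g = A ∇û - ṽ - ψ` with `ψ` divergence free, `σ = A ∇û - ψ` satisfies
`-div σ = f` weakly, and by density this equation may be tested with every `u ∈ H¹°₋₁(Ω)`: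
`∫ f u = ∫ σ·∇u = ⟨g, ∇u⟩_A + ∫ ṽ·∇u`. The minorant is therefore `2⟨g, ∇u⟩_A - ‖∇u‖²_A`, which is
at most `‖g‖²_A` because `‖g - ∇u‖²_A ≥ 0`.
-/

lemma lpNorm_two_eq_sqrt_integral {X E : Type*} [MeasurableSpace X] {μ : Measure X}
    [NormedAddCommGroup E] {v : X → E} (hv : AEStronglyMeasurable v μ) :
    lpNorm v 2 μ = √(∫ x, ‖v x‖ ^ 2 ∂μ) := by
  simp [lpNorm_eq_integral_norm_rpow_toReal two_ne_zero ENNReal.ofNat_ne_top hv,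
    Real.sqrt_eq_rpow]

section InnerL2

variable {X 𝕜 E : Type*} [MeasurableSpace X] {μ : Measure X} [RCLike 𝕜]
  [NormedAddCommGroup E] [InnerProductSpace 𝕜 E]

lemma inner_toLp_toLp {h k : X → E} (hh : MemLp h 2 μ) (hk : MemLp k 2 μ) :
    inner 𝕜 (hh.toLp h) (hk.toLp k) = ∫ x, inner 𝕜 (h x) (k x) ∂μ := by
  rw [L2.inner_def]
  refine integral_congr_ae ?_
  filter_upwards [hh.coeFn_toLp, hk.coeFn_toLp] with x hhx hkx
  rw [hhx, hkx]

lemma integrable_inner_of_memLp_two {h k : X → E} (hh : MemLp h 2 μ) (hk : MemLp k 2 μ) :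
    Integrable (fun x => inner 𝕜 (h x) (k x)) μ := by
  refine (L2.integrable_inner (𝕜 := 𝕜) (hh.toLp h) (hk.toLp k)).congr ?_
  filter_upwards [hh.coeFn_toLp, hk.coeFn_toLp] with x hhx hkx
  rw [hhx, hkx]

lemma tendsto_integral_inner_of_tendsto_lpNorm {ι : Type*} {l : Filter ι} {h k : X → E}
    {p : ι → X → E} (hh : MemLp h 2 μ) (hk : MemLp k 2 μ) (hp : ∀ i, MemLp (p i) 2 μ)
    (hpk : Tendsto (fun i => lpNorm (k - p i) 2 μ) l (𝓝 0)) :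
    Tendsto (fun i => ∫ x, inner 𝕜 (h x) (p i x) ∂μ) l (𝓝 (∫ x, inner 𝕜 (h x) (k x) ∂μ)) := by
  have hLp : Tendsto (fun i => (hp i).toLp (p i)) l (𝓝 (hk.toLp k)) := by
    rw [tendsto_iff_norm_sub_tendsto_zero]
    refine hpk.congr fun i => ?_
    rw [norm_sub_rev, ← MemLp.toLp_sub, Lp.norm_toLp, toReal_eLpNorm (hk.sub (hp i)).1]
  simpa only [inner_toLp_toLp] using
    (tendsto_const_nhds (x := hh.toLp h)).inner (𝕜 := 𝕜) hLp

end InnerL2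

section OperatorField

variable {X 𝕜 E F : Type*} [MeasurableSpace X] {μ : Measure X}
  [NontriviallyNormedField 𝕜] [CompleteSpace 𝕜]
  [NormedAddCommGroup E] [NormedSpace 𝕜 E] [FiniteDimensional 𝕜 E]
  [NormedAddCommGroup F] [NormedSpace 𝕜 F] {A : X → E →L[𝕜] F} {v : X → E}

lemma aestronglyMeasurable_clm_apply_of_forall
    (hA : ∀ ξ, AEStronglyMeasurable (fun x => A x ξ) μ) (hv : AEStronglyMeasurable v μ) :
    AEStronglyMeasurable (fun x => A x (v x)) μ := by
  let b := Module.finBasis 𝕜 E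
  have expand : (fun x => A x (v x)) = fun x => ∑ i, b.coord i (v x) • A x (b i) := by
    ext x
    conv_lhs => rw [← b.sum_repr (v x)]
    simp only [map_sum, map_smul, Module.Basis.coord_apply]
  rw [expand]
  refine Finset.aestronglyMeasurable_fun_sum _ fun i _ => ?_
  have hcoord : Continuous (b.coord i) := LinearMap.continuous_of_finiteDimensional _
  exact (hcoord.comp_aestronglyMeasurable hv).smul (hA _)

lemma memLp_clm_apply_of_ae_bound {p : ENNReal} {C : ℝ}
    (hA : ∀ ξ, AEStronglyMeasurable (fun x => A x ξ) μ)
    (hC : ∀ᵐ x ∂μ, ∀ ξ, ‖A x ξ‖ ≤ C * ‖ξ‖) (hv : MemLp v p μ) :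
    MemLp (fun x => A x (v x)) p μ :=
  hv.of_le_mul (aestronglyMeasurable_clm_apply_of_forall hA hv.1) (hC.mono fun x hx => hx (v x))

end OperatorField

section PositiveForm

variable {E : Type*} [NormedAddCommGroup E] [InnerProductSpace ℝ E]

lemma two_mul_inner_sub_inner_self_le {T : E →ₗ[ℝ] E} (hT : T.IsPositive) (v w : E) :
    2 * ⟪T v, w⟫ - ⟪T w, w⟫ ≤ ⟪T v, v⟫ := by
  have hsymm : ⟪T w, v⟫ = ⟪T v, w⟫ := by rw [hT.isSymmetric, real_inner_comm]
  have hnonneg : 0 ≤ ⟪T (v - w), v - w⟫ := hT.inner_nonneg_left _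
  simp only [map_sub, inner_sub_left, inner_sub_right] at hnonneg
  linarith

lemma two_mul_integral_inner_sub_le {X : Type*} [MeasurableSpace X] {μ : Measure X}
    {A : X → E →ₗ[ℝ] E} {v w : X → E} (hA : ∀ᵐ x ∂μ, (A x).IsPositive)
    (hv : MemLp v 2 μ) (hw : MemLp w 2 μ)
    (hAv : MemLp (fun x => A x (v x)) 2 μ) (hAw : MemLp (fun x => A x (w x)) 2 μ) :
    2 * (∫ x, ⟪A x (v x), w x⟫ ∂μ) - (∫ x, ⟪A x (w x), w x⟫ ∂μ) ≤
      ∫ x, ⟪A x (v x), v x⟫ ∂μ := by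
  have hvw := (integrable_inner_of_memLp_two (𝕜 := ℝ) hAv hw).const_mul 2
  have hww := integrable_inner_of_memLp_two (𝕜 := ℝ) hAw hw
  rw [← integral_const_mul, ← integral_sub hvw hww]
  refine integral_mono_ae (hvw.sub hww) (integrable_inner_of_memLp_two hAv hv) ?_
  filter_upwards [hA] with x hx using two_mul_inner_sub_inner_self_le hx (v x) (w x)

end PositiveForm

section Gradient

variable {𝕜 F : Type*} [RCLike 𝕜] [NormedAddCommGroup F] [InnerProductSpace 𝕜 F] [CompleteSpace F]
  {φ : F → 𝕜}

lemma continuous_gradient_of_contDiff {n : WithTop ℕ∞} (hφ : ContDiff 𝕜 n φ) (hn : n ≠ 0) :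
    Continuous (gradient φ) :=
  (InnerProductSpace.toDual 𝕜 F).symm.continuous.comp (hφ.continuous_fderiv hn)

lemma hasCompactSupport_gradient (hφ : HasCompactSupport φ) : HasCompactSupport (gradient φ) :=
  (hφ.fderiv (𝕜 := 𝕜)).comp_left (g := (InnerProductSpace.toDual 𝕜 F).symm) (map_zero _)

end Gradient

/-- `x ↦ (1+|x|²)^{s/2} u(x)`. The map `u ↦ weighted s u` is an isometry of `L²_s(Ω)` onto `L²(Ω)`,
through which statements about the weighted spaces reduce to the unweighted one. -/
def weighted (s : ℝ) (u : Euc N → ℝ) (x : Euc N) : ℝ := (1 + ‖x‖ ^ 2) ^ (s / 2) * u x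

section Spaces

variable {Ω : Set (Euc N)} {s : ℝ}

lemma continuous_one_add_norm_sq_rpow (t : ℝ) :
    Continuous fun x : Euc N => (1 + ‖x‖ ^ 2) ^ t :=
  Continuous.rpow_const (by fun_prop) fun x => Or.inl (by positivity)

lemma norm_weighted_sq (s : ℝ) (u : Euc N → ℝ) (x : Euc N) :
    ‖weighted s u x‖ ^ 2 = (1 + ‖x‖ ^ 2) ^ s * u x ^ 2 := by
  have hpos : 0 < 1 + ‖x‖ ^ 2 := by positivity
  rw [weighted, Real.norm_eq_abs, sq_abs, mul_pow, ← Real.rpow_mul_natCast hpos.le, Nat.cast_ofNat,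
    div_mul_cancel₀ s two_ne_zero]

lemma inner_weighted_weighted_neg (s : ℝ) (u v : Euc N → ℝ) (x : Euc N) :
    ⟪weighted s u x, weighted (-s) v x⟫ = u x * v x := by
  have hpos : 0 < 1 + ‖x‖ ^ 2 := by positivity
  have hcancel : (1 + ‖x‖ ^ 2) ^ (s / 2) * (1 + ‖x‖ ^ 2) ^ (-s / 2) = 1 := by
    rw [← Real.rpow_add hpos, neg_div, add_neg_cancel, Real.rpow_zero]
  simp only [weighted, RCLike.inner_apply, conj_trivial]
  linear_combination (u x * v x) * hcancel

lemma aestronglyMeasurable_weighted {u : Euc N → ℝ}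
    (hu : AEStronglyMeasurable u (volume.restrict Ω)) (s : ℝ) :
    AEStronglyMeasurable (weighted s u) (volume.restrict Ω) :=
  (continuous_one_add_norm_sq_rpow _).aestronglyMeasurable.mul hu

lemma MemL2.memLp_weighted {u : Euc N → ℝ} (hu : MemL2 Ω s u) :
    MemLp (weighted s u) 2 (volume.restrict Ω) := by
  rw [memLp_two_iff_integrable_sq_norm (aestronglyMeasurable_weighted hu.1 s)]
  simpa only [norm_weighted_sq] using hu.2

lemma nrmL2_eq_lpNorm_weighted {u : Euc N → ℝ}
    (hu : AEStronglyMeasurable u (volume.restrict Ω)) :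
    nrmL2 Ω s u = lpNorm (weighted s u) 2 (volume.restrict Ω) := by
  simp only [lpNorm_two_eq_sqrt_integral (aestronglyMeasurable_weighted hu s), norm_weighted_sq,
    nrmL2, sqL2]

lemma MemL2V.memLp {v : Euc N → Euc N} (hv : MemL2V Ω 0 v) : MemLp v 2 (volume.restrict Ω) := by
  rw [memLp_two_iff_integrable_sq_norm hv.1]
  simpa only [Real.rpow_zero, one_mul] using hv.2

lemma nrmL2V_zero_eq_lpNorm {v : Euc N → Euc N}
    (hv : AEStronglyMeasurable v (volume.restrict Ω)) :
    nrmL2V Ω 0 v = lpNorm v 2 (volume.restrict Ω) := by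
  simp only [lpNorm_two_eq_sqrt_integral hv, nrmL2V, sqL2V, Real.rpow_zero, one_mul]

lemma IsTest.memL2 {φ : Euc N → ℝ} (hφ : IsTest Ω φ) : MemL2 Ω s φ := by
  have hsq_support : HasCompactSupport fun x => φ x ^ 2 :=
    hφ.2.1.comp_left (g := (· ^ 2)) (zero_pow two_ne_zero)
  have hcont := (continuous_one_add_norm_sq_rpow s).mul (hφ.1.continuous.pow 2)
  exact ⟨hφ.1.continuous.aestronglyMeasurable,
    (hcont.integrable_of_hasCompactSupport hsq_support.mul_left).integrableOn⟩

lemma IsTest.memLp_gradient {φ : Euc N → ℝ} (hφ : IsTest Ω φ) :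
    MemLp (gradient φ) 2 (volume.restrict Ω) :=
  ((continuous_gradient_of_contDiff hφ.1 (by simp)).memLp_of_hasCompactSupport
    (hasCompactSupport_gradient hφ.2.1)).restrict Ω

lemma tendsto_integral_mul_of_tendsto_nrmL2 {ι : Type*} {l : Filter ι} {f u : Euc N → ℝ}
    {φ : ι → Euc N → ℝ} (hf : MemL2 Ω s f) (hu : MemL2 Ω (-s) u) (hφ : ∀ i, MemL2 Ω (-s) (φ i))
    (hφu : Tendsto (fun i => nrmL2 Ω (-s) (fun x => u x - φ i x)) l (𝓝 0)) :
    Tendsto (fun i => ∫ x in Ω, f x * φ i x) l (𝓝 (∫ x in Ω, f x * u x)) := by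
  have hlp : Tendsto (fun i => lpNorm (weighted (-s) u - weighted (-s) (φ i)) 2
      (volume.restrict Ω)) l (𝓝 0) := by
    refine hφu.congr fun i => ?_
    have hsub : weighted (-s) (u - φ i) = weighted (-s) u - weighted (-s) (φ i) :=
      funext fun x => mul_sub _ _ _
    rw [← hsub]
    exact nrmL2_eq_lpNorm_weighted (hu.1.sub (hφ i).1)
  simpa only [inner_weighted_weighted_neg] using tendsto_integral_inner_of_tendsto_lpNorm (𝕜 := ℝ)
    hf.memLp_weighted hu.memLp_weighted (fun i => (hφ i).memLp_weighted) hlp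

lemma tendsto_integral_inner_of_tendsto_nrmL2V {ι : Type*} {l : Filter ι} {σ v : Euc N → Euc N}
    {w : ι → Euc N → Euc N} (hσ : MemLp σ 2 (volume.restrict Ω))
    (hv : MemLp v 2 (volume.restrict Ω)) (hw : ∀ i, MemLp (w i) 2 (volume.restrict Ω))
    (hwv : Tendsto (fun i => nrmL2V Ω 0 (fun x => v x - w i x)) l (𝓝 0)) :
    Tendsto (fun i => ∫ x in Ω, ⟪σ x, w i x⟫) l (𝓝 (∫ x in Ω, ⟪σ x, v x⟫)) :=
  tendsto_integral_inner_of_tendsto_lpNorm hσ hv hw <|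
    hwv.congr fun i => nrmL2V_zero_eq_lpNorm (hv.sub (hw i)).1

lemma MemH10.integral_inner_eq_neg_integral_mul {u d : Euc N → ℝ} {g σ : Euc N → Euc N}
    (hu : MemH10 Ω u g) (hσ : MemLp σ 2 (volume.restrict Ω)) (hd : MemL2 Ω 1 d)
    (hdiv : IsWeakDiv Ω σ d) :
    (∫ x in Ω, ⟪σ x, g x⟫) = -∫ x in Ω, d x * u x := by
  obtain ⟨hu_mem, hg_mem, -, φ, hφ, hφu, hφg⟩ := hu
  have hflux : Tendsto (fun n => ∫ x in Ω, ⟪σ x, gradient (φ n) x⟫) atTop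
      (𝓝 (∫ x in Ω, ⟪σ x, g x⟫)) :=
    tendsto_integral_inner_of_tendsto_nrmL2V hσ hg_mem.memLp (fun n => (hφ n).memLp_gradient) hφg
  have hsource := (tendsto_integral_mul_of_tendsto_nrmL2 hd hu_mem (fun n => (hφ n).memL2) hφu).neg
  exact tendsto_nhds_unique hflux (hsource.congr fun n => (hdiv (φ n) (hφ n)).symm)

lemma isWeakDiv_add_of_ae_eq {A : Euc N → Euc N →L[ℝ] Euc N} {f : Euc N → ℝ}
    {p g v w ψ : Euc N → Euc N} (hAp : MemLp (fun x => A x (p x)) 2 (volume.restrict Ω))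
    (hp : ∀ φ, IsTest Ω φ → (∫ x in Ω, ⟪A x (p x), gradient φ x⟫) = ∫ x in Ω, f x * φ x)
    (hψ : MemD0 Ω ψ)
    (hw : ∀ᵐ x ∂volume.restrict Ω, A x (w x) = v x)
    (hdec : ∀ᵐ x ∂volume.restrict Ω, A x ((p x - w x) - g x) = ψ x) :
    IsWeakDiv Ω (fun x => A x (g x) + v x) (-f) := by
  intro φ hφ
  have hsplit : ∀ᵐ x ∂volume.restrict Ω, ⟪A x (g x) + v x, gradient φ x⟫ =
      ⟪A x (p x), gradient φ x⟫ - ⟪ψ x, gradient φ x⟫ := by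
    filter_upwards [hw, hdec] with x hwx hdecx
    rw [← inner_sub_left, ← hdecx, ← hwx]
    simp only [map_sub]
    congr 1
    abel
  rw [integral_congr_ae hsplit, integral_sub (integrable_inner_of_memLp_two hAp hφ.memLp_gradient)
    (integrable_inner_of_memLp_two hψ.1.memLp hφ.memLp_gradient), hψ.2 φ hφ, sub_zero, hp φ hφ]
  simp only [Pi.neg_apply, neg_mul, integral_neg, neg_neg]

end Spaces

lemma Coeff.ae_isPositive {Ω : Set (Euc N)} (M : Coeff N Ω) :
    ∀ᵐ x ∂volume.restrict Ω, (M.A x : Euc N →ₗ[ℝ] Euc N).IsPositive := by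
  filter_upwards [M.coer] with x hx
  exact ⟨M.symm x, fun ξ => le_trans (by positivity) (hx ξ)⟩

theorem stmt_13_general {Ω : Set (Euc N)} {A : Euc N → Euc N →L[ℝ] Euc N} {C : ℝ}
    (hA : ∀ ξ, AEStronglyMeasurable (fun x => A x ξ) (volume.restrict Ω))
    (hC : ∀ᵐ x ∂volume.restrict Ω, ∀ ξ, ‖A x ξ‖ ≤ C * ‖ξ‖)
    (hpos : ∀ᵐ x ∂volume.restrict Ω, (A x : Euc N →ₗ[ℝ] Euc N).IsPositive)
    {f : Euc N → ℝ} (hf : MemL2 Ω 1 f) {g v : Euc N → Euc N} (hg : MemL2V Ω 0 g)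
    (hv : MemL2V Ω 0 v) (hdiv : IsWeakDiv Ω (fun x => A x (g x) + v x) (-f))
    {u : Euc N → ℝ} {g' : Euc N → Euc N} (hu : MemH10 Ω u g') :
    2 * (∫ x in Ω, f x * u x) - (∫ x in Ω, ⟪A x (g' x), g' x⟫) - 2 * (∫ x in Ω, ⟪v x, g' x⟫) ≤
      sqA Ω A g := by
  have hg' : MemLp g' 2 (volume.restrict Ω) := hu.2.1.memLp
  have hAg := memLp_clm_apply_of_ae_bound hA hC hg.memLp
  have hAg' := memLp_clm_apply_of_ae_bound hA hC hg'
  have hf_neg : MemL2 Ω 1 (-f) := ⟨hf.1.neg, by simpa only [Pi.neg_apply, neg_sq] using hf.2⟩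
  have htested : (∫ x in Ω, ⟪A x (g x), g' x⟫) + (∫ x in Ω, ⟪v x, g' x⟫) =
      ∫ x in Ω, f x * u x := by
    rw [← integral_add (integrable_inner_of_memLp_two hAg hg')
      (integrable_inner_of_memLp_two hv.memLp hg')]
    simpa only [Pi.add_apply, inner_add_left, Pi.neg_apply, neg_mul, integral_neg, neg_neg] using
      hu.integral_inner_eq_neg_integral_mul (hAg.add hv.memLp) hf_neg hdiv
  have hsquare : 2 * (∫ x in Ω, ⟪A x (g x), g' x⟫) - (∫ x in Ω, ⟪A x (g' x), g' x⟫) ≤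
      sqA Ω A g := two_mul_integral_inner_sub_le hpos hg.memLp hg' hAg hAg'
  linarith

/-- Non-conforming minorant for the gradient part:
`‖g‖²_A ≥ 2∫ f u − ∫ A∇u·∇u − 2∫ ṽ·∇u` for all `u ∈ H¹°₋₁(Ω)`. -/
theorem stmt_13 (Ω : Set (Euc N)) (hΩ : IsOpen Ω) (hN : 3 ≤ N) (M : Coeff N Ω)
    (f : Euc N → ℝ) (hf : MemL2 Ω 1 f)
    (uh : Euc N → ℝ) (gu : Euc N → Euc N)
    (huh : MemL2 Ω (-1) uh) (hgu : MemL2V Ω 0 gu) (hguw : IsWeakGrad Ω uh gu)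
    (hweak : ∀ φ : Euc N → ℝ, IsTest Ω φ →
      (∫ x in Ω, ⟪M.A x (gu x), gradient φ x⟫) = ∫ x in Ω, f x * φ x)
    (vt : Euc N → Euc N) (hvt : MemL2V Ω 0 vt)
    (wt : Euc N → Euc N) (hwt : IsAInv Ω M.A vt wt)
    (g ψ : Euc N → Euc N) (hg : MemG Ω g) (hψ : MemD0 Ω ψ)
    (hdec : ∀ᵐ x ∂(volume.restrict Ω), M.A x ((gu x - wt x) - g x) = ψ x) :
    ∀ (u : Euc N → ℝ) (g' : Euc N → Euc N), MemH10 Ω u g' →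
      2 * (∫ x in Ω, f x * u x) - (∫ x in Ω, ⟪M.A x (g' x), g' x⟫) -
          2 * (∫ x in Ω, ⟪vt x, g' x⟫) ≤
        sqA Ω M.A g := by
  obtain ⟨C, hC⟩ := M.bdd
  exact fun u g' => stmt_13_general M.meas hC M.ae_isPositive hf hg.1 hvt <|
    isWeakDiv_add_of_ae_eq (memLp_clm_apply_of_ae_bound M.meas hC hgu.memLp) hweak hψ hwt.2 hdec
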